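/- Suppose the degree n of the Blaschke product B is a prime number, and let g ∈ H^∞. If Γ(g) vanishes identically on 𝔻, then g is a function of B, i.e. there exists a bounded holomorphic function g_1 on 𝔻 with g = g_1 ∘ B; equivalently, if g is not of the form g_1 ∘ B for any bounded holomorphic g_1, then Γ(g) is not identically zero. -/

import Mathlib

/-!
Write `B = A / Q` with `A`, `Q` polynomials and let `P_b = A - b Q`, whose roots are the fiber of `B`
over `b`. Let `H` be the domain of holomorphic functions on the disk (`HolRing`), viewed as an
algebra over itself through `f ↦ f ∘ B`. This algebra is free with basis `1, z, …, z ^ (n - 1)`: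

* the powers span, by Weierstrass division by `P_b` in the form of a Cauchy integral
  (`exists_division`);
* they are independent, because all but finitely many fibers have `n` distinct points
  (`exists_finite_bad`), and a nonzero polynomial of degree less than `n` cannot vanish on such a
  fiber (`coeff_eq_zero_of_fiber`).

Hence the fraction field of `H` has prime degree `n` over the fraction field of `H ∘ B`, so `g` either
lies in the smaller field or generates the larger one (`algebra_dichotomy`). If it generates, then
`D(B(z)) z` is a polynomial in `g(z)` with coefficients functions of `B(z)`, for some `D ≠ 0`, so `g`
separates the points of almost every fiber, which contradicts `Γ(g) = 0`. If it lies in the smaller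
field, then `g` is constant on almost every fiber, so in `g = ∑ c_j(B) z ^ j` all `c_j` with `j ≥ 1`
vanish and `g = c_0 ∘ B`; the function `c_0` is bounded since `B` maps the disk onto itself.
-/

open Complex Polynomial MeasureTheory Metric Set Filter Topology
open scoped Classical

noncomputable section

/-- The open unit disk in `ℂ`. -/
def uDisk : Set ℂ := Metric.ball 0 1

/-- The closed unit disk in `ℂ`. -/
def cDisk : Set ℂ := Metric.closedBall 0 1

/-- The finite Blaschke product with zero set `a 0, …, a (n-1)`:
`B(z) = ∏_j (a_j - z)/(1 - conj(a_j)·z)`. -/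
def blaschke {n : ℕ} (a : Fin n → ℂ) (z : ℂ) : ℂ :=
  ∏ j, (a j - z) / (1 - (starRingEnd ℂ) (a j) * z)

/-- The multiset of the `n` solutions (with multiplicity) `φ_0(z) = z, φ_1(z), …, φ_{n-1}(z)`
of `B(w) = B(z)`, realized as the roots of the polynomial equation
`∏_j (a_j - w) = B(z) · ∏_j (1 - conj(a_j)·w)`. -/
def fiberMS {n : ℕ} (a : Fin n → ℂ) (z : ℂ) : Multiset ℂ :=
  ((∏ j, (Polynomial.C (a j) - Polynomial.X)) -
    Polynomial.C (blaschke a z) *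
      ∏ j, (1 - Polynomial.C ((starRingEnd ℂ) (a j)) * Polynomial.X)).roots

/-- `𝒟(f)(z) = ∏_{j=1}^{n-1} (f(z) - f(φ_j(z)))`, where `φ_1(z), …, φ_{n-1}(z)` is the
fiber of `B` over `B(z)` with one copy of `z` removed.  In particular
`calD a id z = ∏_{j=1}^{n-1} (z - φ_j(z))`. -/
def calD {n : ℕ} (a : Fin n → ℂ) (f : ℂ → ℂ) (z : ℂ) : ℂ :=
  (((fiberMS a z).erase z).map (fun w => f z - f w)).prod

/-- `G` is (the holomorphic extension after removing singularities of) `Γ(f) = 𝒟(f)/𝒟`. -/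
def IsGamma {n : ℕ} (a : Fin n → ℂ) (f G : ℂ → ℂ) : Prop :=
  DifferentiableOn ℂ G uDisk ∧ ∀ z ∈ uDisk, G z * calD a id z = calD a f z

/-- `p`-th power integral mean of `f` on the circle of radius `r`. -/
def circMean (p : ℝ) (f : ℂ → ℂ) (r : ℝ) : ℝ :=
  ∫ θ in (0:ℝ)..(2 * Real.pi), ‖f ((r : ℂ) * Complex.exp ((θ : ℂ) * Complex.I))‖ ^ p

/-- The `H^p` norm of `f` (for `0 < p < ∞`). -/
def hpNorm (p : ℝ) (f : ℂ → ℂ) : ℝ :=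
  (sSup {m : ℝ | ∃ r ∈ Set.Ico (0:ℝ) 1, m = circMean p f r}) ^ (1 / p)

/-- Membership in the Hardy space `H^p`, `0 < p < ∞`: holomorphic on the disk with
uniformly bounded integral means. -/
def MemHp (p : ℝ) (f : ℂ → ℂ) : Prop :=
  DifferentiableOn ℂ f uDisk ∧ ∃ C : ℝ, ∀ r ∈ Set.Ico (0:ℝ) 1, circMean p f r ≤ C

/-- Membership in `H^∞`: bounded holomorphic functions on the disk. -/
def MemHinf (f : ℂ → ℂ) : Prop :=
  DifferentiableOn ℂ f uDisk ∧ ∃ C : ℝ, ∀ z ∈ uDisk, ‖f z‖ ≤ C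

/-- The `H^∞` (sup) norm. -/
def hinfNorm (f : ℂ → ℂ) : ℝ := sSup {m : ℝ | ∃ z ∈ uDisk, m = ‖f z‖}

/-- The algebra of all polynomials in the functions `F 0, …, F (m-1)`. -/
def algGen (m : ℕ) (F : Fin m → (ℂ → ℂ)) : Set (ℂ → ℂ) :=
  {h | ∃ P : MvPolynomial (Fin m) ℂ, ∀ z : ℂ, h z = MvPolynomial.eval (fun i => F i z) P}

/-- The algebra `ℂ[F,G]` of all polynomials in the two functions `F` and `G`. -/
def algGen2 (F G : ℂ → ℂ) : Set (ℂ → ℂ) := algGen 2 ![F, G]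

/-- The (sequential) closure of `S` in `H^p`. -/
def hpClosure (p : ℝ) (S : Set (ℂ → ℂ)) : Set (ℂ → ℂ) :=
  {f | MemHp p f ∧ ∃ u : ℕ → (ℂ → ℂ), (∀ k, u k ∈ S) ∧
    Filter.Tendsto (fun k => hpNorm p (fun z => f z - u k z)) Filter.atTop (nhds 0)}

/-- `S` has finite codimension in `H^p`: finitely many functions in `H^p` together with `S`
span all of `H^p`. -/
def FiniteCodimHp (p : ℝ) (S : Set (ℂ → ℂ)) : Prop :=
  ∃ (k : ℕ) (e : Fin k → (ℂ → ℂ)), (∀ i, MemHp p (e i)) ∧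
    ∀ f, MemHp p f → ∃ (c : Fin k → ℂ) (s : ℂ → ℂ), s ∈ S ∧
      ∀ z ∈ uDisk, f z = s z + ∑ i, c i * e i z

/-- Inner function: bounded by 1, holomorphic, radial limits of modulus 1 a.e. -/
def IsInner (f : ℂ → ℂ) : Prop :=
  DifferentiableOn ℂ f uDisk ∧ (∀ z ∈ uDisk, ‖f z‖ ≤ 1) ∧
  ∀ᵐ θ : ℝ ∂volume, ∃ l : ℂ, ‖l‖ = 1 ∧
    Filter.Tendsto (fun r : ℝ => f ((r : ℂ) * Complex.exp ((θ : ℂ) * Complex.I)))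
      (nhdsWithin 1 (Set.Iio 1)) (nhds l)

/-- `J` divides `h`, with a quotient holomorphic on the disk. -/
def InnerDivides (J h : ℂ → ℂ) : Prop :=
  ∃ k : ℂ → ℂ, DifferentiableOn ℂ k uDisk ∧ ∀ z ∈ uDisk, h z = J z * k z

/-- Outer function: a holomorphic function on the disk whose only inner divisors are
unimodular constants (i.e. whose inner part is a unimodular constant). -/
def IsOuter (h : ℂ → ℂ) : Prop :=
  DifferentiableOn ℂ h uDisk ∧
  ∀ J : ℂ → ℂ, IsInner J → InnerDivides J h →
    ∃ c : ℂ, ‖c‖ = 1 ∧ ∀ z ∈ uDisk, J z = c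

/-- `I` is the inner part of `h`: `I` is inner and `h = I·F` with `F` outer. -/
def IsInnerPartOf (I h : ℂ → ℂ) : Prop :=
  IsInner I ∧ ∃ F : ℂ → ℂ, IsOuter F ∧ ∀ z ∈ uDisk, h z = I z * F z

/-- Finite Blaschke product (up to a unimodular constant factor). -/
def IsFiniteBlaschke (f : ℂ → ℂ) : Prop :=
  ∃ (m : ℕ) (c : ℂ) (b : Fin m → ℂ), ‖c‖ = 1 ∧ (∀ i, b i ∈ uDisk) ∧
    ∀ z ∈ uDisk, f z = c * ∏ i, (b i - z) / (1 - (starRingEnd ℂ) (b i) * z)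

/-- `h` has no singular inner factor: every zero-free inner divisor of `h` is a
unimodular constant. -/
def NoSingularInnerFactor (h : ℂ → ℂ) : Prop :=
  ∀ J : ℂ → ℂ, IsInner J → (∀ z ∈ uDisk, J z ≠ 0) → InnerDivides J h →
    ∃ c : ℂ, ‖c‖ = 1 ∧ ∀ z ∈ uDisk, J z = c

/-! ### Extensions of prime degree -/

/-- In an extension of prime degree every element is either in the base field or generates. -/
theorem field_dichotomy {K M : Type*} [Field K] [Field M] [Algebra K M]
    (hp : (Module.finrank K M).Prime) (x : M) :
    (∃ c : K, algebraMap K M c = x) ∨ ∀ y : M, ∃ p : K[X], aeval x p = y := by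
  have : FiniteDimensional K M := Module.finite_of_finrank_pos hp.pos
  have hdvd : Module.finrank K (IntermediateField.adjoin K {x}) ∣ Module.finrank K M :=
    ⟨_, (Module.finrank_mul_finrank K (IntermediateField.adjoin K {x}) M).symm⟩
  rcases (Nat.dvd_prime hp).1 hdvd with h1 | h1
  · left
    have hF := IntermediateField.finrank_eq_one_iff.1 h1
    have hg := IntermediateField.mem_adjoin_simple_self K x
    rw [hF] at hg
    exact IntermediateField.mem_bot.1 hg
  · right
    intro y
    have hF : IntermediateField.adjoin K {x} = ⊤ :=
      IntermediateField.eq_of_le_of_finrank_eq le_top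
        (by rw [h1, IntermediateField.finrank_top'])
    have hy : y ∈ IntermediateField.adjoin K {x} := by rw [hF]; trivial
    have hy' : y ∈ Algebra.adjoin K {x} := by
      rw [← IntermediateField.adjoin_simple_toSubalgebra_of_isAlgebraic
        (Algebra.IsAlgebraic.isAlgebraic x)]
      exact hy
    obtain ⟨p, hp⟩ := Algebra.adjoin_singleton_eq_range_aeval K x ▸ hy'
    exact ⟨p, hp⟩

attribute [local instance] FractionRing.liftAlgebra in
/-- The dichotomy of `field_dichotomy` for a domain `S` that is free over a domain `R` with basis
`1, z, …, z ^ (n - 1)` and `n` prime, with denominators cleared. The `R`-algebra structure is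
given by a ring homomorphism, since it is applied with `R = S`. -/
theorem algebra_dichotomy {R S : Type*} [CommRing R] [IsDomain R] [CommRing S] [IsDomain S]
    (φ : R →+* S) (hφ : Function.Injective φ) {n : ℕ} (hn : n.Prime) (z g : S)
    (hind : ∀ c : Fin n → R, ∑ j, φ (c j) * z ^ (j : ℕ) = 0 → ∀ j, c j = 0)
    (hspan : ∀ s : S, ∃ c : Fin n → R, s = ∑ j, φ (c j) * z ^ (j : ℕ)) :
    (∃ D c : R, D ≠ 0 ∧ φ D * g = φ c) ∨
      (∃ D : R, ∃ p : R[X], D ≠ 0 ∧ φ D * z = p.eval₂ φ g) := by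
  let _ : Algebra R S := φ.toAlgebra
  have hsmul : ∀ (r : R) (s : S), r • s = φ r * s := fun r s => Algebra.smul_def r s
  have hinj : FaithfulSMul R S := (faithfulSMul_iff_algebraMap_injective R S).2 hφ
  let b : Module.Basis (Fin n) R S := Module.Basis.mk (v := fun j : Fin n => z ^ (j : ℕ))
    (by
      rw [Fintype.linearIndependent_iff]
      intro c hc
      simp only [hsmul] at hc
      exact hind c hc)
    (by
      intro s _
      obtain ⟨c, hc⟩ := hspan s
      rw [hc]
      refine Submodule.sum_mem _ fun j _ => ?_
      rw [← hsmul]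
      exact Submodule.smul_mem _ _ (Submodule.subset_span ⟨j, rfl⟩))
  have hfin : Module.finrank (FractionRing R) (FractionRing S) = n := by
    rw [IsFractionRing.finrank_eq R (FractionRing R) S (FractionRing S),
      Module.finrank_eq_card_basis b, Fintype.card_fin]
  have hι : Function.Injective (algebraMap S (FractionRing S)) := IsFractionRing.injective S _
  have hmap : ∀ r : R, algebraMap (FractionRing R) (FractionRing S)
      (algebraMap R (FractionRing R) r) = algebraMap S (FractionRing S) (φ r) := fun r => by
    rw [← IsScalarTower.algebraMap_apply R (FractionRing R) (FractionRing S),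
      IsScalarTower.algebraMap_apply R S (FractionRing S)]
    rfl
  rcases field_dichotomy (hfin.symm ▸ hn) (algebraMap S (FractionRing S) g) with ⟨x, hx⟩ | h
  · left
    obtain ⟨c, D, hD, rfl⟩ := IsFractionRing.div_surjective (A := R) x
    refine ⟨D, c, nonZeroDivisors.ne_zero hD, hι ?_⟩
    have hD0 : algebraMap S (FractionRing S) (φ D) ≠ 0 := by
      rw [Ne, map_eq_zero_iff _ hι, map_eq_zero_iff _ hφ]; exact nonZeroDivisors.ne_zero hD
    rw [map_mul, ← hx, map_div₀, hmap, hmap, mul_div_cancel₀ _ hD0]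
  · right
    obtain ⟨p, hp⟩ := h (algebraMap S (FractionRing S) z)
    obtain ⟨D, hD, hq⟩ := IsLocalization.integerNormalization_spec (nonZeroDivisors R) p
    refine ⟨D, IsLocalization.integerNormalization (nonZeroDivisors R) p,
      nonZeroDivisors.ne_zero hD, hι ?_⟩
    have h2 := congrArg (fun q => aeval (algebraMap S (FractionRing S) g) q) hq
    have hsm : D • p = C (algebraMap R (FractionRing R) D) * p := by
      rw [← smul_eq_C_mul, algebraMap_smul]
    simp only [hsm, map_mul, hp, aeval_C, hmap] at h2
    rw [map_mul, ← h2, aeval_map_algebraMap, hom_eval₂, aeval_def]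
    rfl

/-! ### Fibers of the Blaschke product -/

theorem mem_uDisk {z : ℂ} : z ∈ uDisk ↔ ‖z‖ < 1 := by simp [uDisk]

/-- The numerator `A(w) = ∏ (a_j - w)` of the Blaschke product. -/
def numPoly {n : ℕ} (a : Fin n → ℂ) : ℂ[X] := ∏ j, (C (a j) - X)

/-- The denominator `Q(w) = ∏ (1 - conj(a_j) w)` of the Blaschke product. -/
def denPoly {n : ℕ} (a : Fin n → ℂ) : ℂ[X] := ∏ j, (1 - C ((starRingEnd ℂ) (a j)) * X)

/-- The polynomial `P_b = A - b Q`, whose roots are the fiber of `B` over `b`. -/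
def fibPoly {n : ℕ} (a : Fin n → ℂ) (b : ℂ) : ℂ[X] := numPoly a - C b * denPoly a

theorem fiberMS_eq {n : ℕ} (a : Fin n → ℂ) (z : ℂ) :
    fiberMS a z = (fibPoly a (blaschke a z)).roots := rfl

theorem eval_fibPoly {n : ℕ} (a : Fin n → ℂ) (b w : ℂ) :
    (fibPoly a b).eval w = (numPoly a).eval w - b * (denPoly a).eval w := by
  simp [fibPoly]

theorem blaschke_eq {n : ℕ} (a : Fin n → ℂ) (w : ℂ) :
    blaschke a w = (numPoly a).eval w / (denPoly a).eval w := by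
  simp [blaschke, numPoly, denPoly, eval_prod, Finset.prod_div_distrib]

theorem normSq_factor (a w : ℂ) :
    ‖1 - (starRingEnd ℂ) a * w‖ ^ 2 - ‖a - w‖ ^ 2 = (1 - ‖a‖ ^ 2) * (1 - ‖w‖ ^ 2) := by
  simp only [← Complex.normSq_eq_norm_sq, Complex.normSq_apply]
  simp
  ring

theorem factor_ne {a w : ℂ} (ha : ‖a‖ < 1) (hw : ‖w‖ ≤ 1) : 1 - (starRingEnd ℂ) a * w ≠ 0 := by
  intro h
  have h1 : (starRingEnd ℂ) a * w = 1 := (sub_eq_zero.1 h).symm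
  have h2 := congrArg norm h1
  rw [norm_mul, RCLike.norm_conj, norm_one] at h2
  nlinarith [norm_nonneg a, norm_nonneg w]

theorem factor_lt {a w : ℂ} (ha : ‖a‖ < 1) (hw : ‖w‖ < 1) :
    ‖(a - w) / (1 - (starRingEnd ℂ) a * w)‖ < 1 := by
  have h := normSq_factor a w
  rw [norm_div, div_lt_one (norm_pos_iff.2 (factor_ne ha hw.le))]
  have h1 : 0 < (1 - ‖a‖ ^ 2) * (1 - ‖w‖ ^ 2) :=
    mul_pos (by nlinarith [norm_nonneg a]) (by nlinarith [norm_nonneg w])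
  exact lt_of_pow_lt_pow_left₀ 2 (norm_nonneg _) (by linarith)

section Blaschke

variable {n : ℕ} {a : Fin n → ℂ}

theorem denPoly_ne (ha : ∀ j, a j ∈ uDisk) {w : ℂ} (hw : w ∈ uDisk) :
    (denPoly a).eval w ≠ 0 := by
  simp only [denPoly, eval_prod]
  refine Finset.prod_ne_zero_iff.2 fun j _ => ?_
  simpa using factor_ne (mem_uDisk.1 (ha j)) (mem_uDisk.1 hw).le

theorem blaschke_mem (ha : ∀ j, a j ∈ uDisk) (i : Fin n) {w : ℂ} (hw : w ∈ uDisk) :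
    blaschke a w ∈ uDisk := by
  rw [mem_uDisk] at *
  rw [blaschke, ← Finset.mul_prod_erase _ _ (Finset.mem_univ i), norm_mul, norm_prod]
  refine mul_lt_one_of_nonneg_of_lt_one_left (norm_nonneg _)
    (factor_lt (mem_uDisk.1 (ha i)) hw) (Finset.prod_le_one (fun _ _ => norm_nonneg _) fun j _ => ?_)
  exact (factor_lt (mem_uDisk.1 (ha j)) hw).le

theorem differentiableOn_blaschke (ha : ∀ j, a j ∈ uDisk) :
    DifferentiableOn ℂ (blaschke a) uDisk := by
  have : DifferentiableOn ℂ (fun w => (numPoly a).eval w / (denPoly a).eval w) uDisk :=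
    (numPoly a).differentiable.differentiableOn.div (denPoly a).differentiable.differentiableOn
      fun w hw => denPoly_ne ha hw
  exact this.congr fun w _ => blaschke_eq a w

/-- Off the open disk `|A| ≥ |Q|` and `A ≠ 0`, so `A = b Q` has no solution there if `|b| < 1`. -/
theorem fibPoly_root_mem (ha : ∀ j, a j ∈ uDisk) {b w : ℂ} (hb : b ∈ uDisk)
    (h : (fibPoly a b).eval w = 0) : w ∈ uDisk := by
  rw [mem_uDisk] at *
  by_contra hw
  push Not at hw
  rw [eval_fibPoly, sub_eq_zero] at h
  have h1 : ‖(denPoly a).eval w‖ ≤ ‖(numPoly a).eval w‖ := by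
    simp only [denPoly, numPoly, eval_prod, norm_prod]
    refine Finset.prod_le_prod (fun _ _ => norm_nonneg _) fun j _ => ?_
    have h2 := normSq_factor (a j) w
    have h3 := mem_uDisk.1 (ha j)
    have h4 : (1 - ‖a j‖ ^ 2) * (1 - ‖w‖ ^ 2) ≤ 0 :=
      mul_nonpos_of_nonneg_of_nonpos (by nlinarith [norm_nonneg (a j)])
        (by nlinarith [norm_nonneg w])
    simp only [eval_sub, eval_one, eval_mul, eval_C, eval_X]
    exact le_of_sq_le_sq (by linarith) (norm_nonneg _)
  have h2 : (numPoly a).eval w ≠ 0 := by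
    simp only [numPoly, eval_prod]
    refine Finset.prod_ne_zero_iff.2 fun j _ => ?_
    simp only [eval_sub, eval_C, eval_X]
    intro h5
    have h3 := mem_uDisk.1 (ha j)
    rw [sub_eq_zero.1 h5] at h3
    linarith
  have h3 := congrArg norm h
  rw [norm_mul] at h3
  have h4 := norm_pos_iff.2 h2
  nlinarith [norm_nonneg b, norm_nonneg ((denPoly a).eval w)]

theorem fibPoly_eval_eq_zero_iff (ha : ∀ j, a j ∈ uDisk) {b w : ℂ} (hw : w ∈ uDisk) :
    (fibPoly a b).eval w = 0 ↔ blaschke a w = b := by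
  rw [eval_fibPoly, blaschke_eq, div_eq_iff (denPoly_ne ha hw), sub_eq_zero]

theorem numPoly_natDegree : (numPoly a).natDegree = n := by
  rw [numPoly, natDegree_prod _ _ fun j _ => ?_]
  · have : ∀ j, (C (a j) - X).natDegree = 1 := fun j => by
      rw [← neg_sub, natDegree_neg, natDegree_X_sub_C]
    simp [this]
  · rw [← neg_sub]; exact neg_ne_zero.2 (X_sub_C_ne_zero _)

/-- A zero of `B` at the origin contributes the factor `1` to `Q`, so that `A - b Q` has degree
exactly `n`. -/
theorem denPoly_natDegree_lt {i : Fin n} (hi : a i = 0) : (denPoly a).natDegree < n := by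
  have h1 : (denPoly a).natDegree ≤ ∑ j : Fin n, if j = i then 0 else 1 := by
    refine (natDegree_prod_le _ _).trans (Finset.sum_le_sum fun j _ => ?_)
    split_ifs with h
    · simp [h, hi]
    · refine (natDegree_sub_le _ _).trans ?_
      simp only [natDegree_one, zero_le, sup_of_le_right]
      exact natDegree_C_mul_le _ _ |>.trans natDegree_X_le
  have h2 : (∑ j : Fin n, if j = i then 0 else 1) < ∑ j : Fin n, 1 :=
    Finset.sum_lt_sum (fun j _ => by split_ifs <;> simp) ⟨i, Finset.mem_univ i, by simp⟩
  simp only [Finset.sum_const, Finset.card_univ, Fintype.card_fin, smul_eq_mul, mul_one] at h2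
  exact h1.trans_lt h2

theorem fibPoly_natDegree {i : Fin n} (hi : a i = 0) (b : ℂ) : (fibPoly a b).natDegree = n := by
  rw [fibPoly, natDegree_sub_eq_left_of_natDegree_lt, numPoly_natDegree]
  rw [numPoly_natDegree]
  exact (natDegree_C_mul_le _ _).trans_lt (denPoly_natDegree_lt hi)

theorem fibPoly_ne_zero {i : Fin n} (hi : a i = 0) (b : ℂ) : fibPoly a b ≠ 0 := by
  intro h
  have := fibPoly_natDegree hi b
  rw [h, natDegree_zero] at this
  exact (Fin.pos i).ne this

theorem card_roots_fibPoly {i : Fin n} (hi : a i = 0) (b : ℂ) :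
    (fibPoly a b).roots.card = n := by
  rw [IsAlgClosed.card_roots_eq_natDegree, fibPoly_natDegree hi]

theorem blaschke_surj (ha : ∀ j, a j ∈ uDisk) {i : Fin n} (hi : a i = 0) {b : ℂ}
    (hb : b ∈ uDisk) : ∃ w ∈ uDisk, blaschke a w = b := by
  have h : 0 < (fibPoly a b).roots.card := by rw [card_roots_fibPoly hi]; exact Fin.pos i
  obtain ⟨w, hw⟩ := Multiset.card_pos_iff_exists_mem.1 h
  have hw' : (fibPoly a b).eval w = 0 := (mem_roots'.1 hw).2
  have hwD := fibPoly_root_mem ha hb hw'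
  exact ⟨w, hwD, (fibPoly_eval_eq_zero_iff ha hwD).1 hw'⟩

theorem isCoprime_num_den (ha : ∀ j, a j ∈ uDisk) : IsCoprime (numPoly a) (denPoly a) := by
  refine IsCoprime.prod_left fun j _ => IsCoprime.prod_right fun k _ => ?_
  have h := factor_ne (mem_uDisk.1 (ha k)) (mem_uDisk.1 (ha j)).le
  set t := 1 - (starRingEnd ℂ) (a k) * a j with ht
  refine ⟨-C ((starRingEnd ℂ) (a k) * t⁻¹), C t⁻¹, ?_⟩
  have h2 : C t⁻¹ * (1 - C ((starRingEnd ℂ) (a k)) * C (a j)) = (1 : ℂ[X]) := by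
    rw [← C_mul, ← C_1, ← C_sub, ← C_mul, ← ht, inv_mul_cancel₀ h]
  rw [C_mul]
  linear_combination h2

/-- All but finitely many fibers consist of `n` distinct points: a multiple point of a fiber is a
root of `A'Q - AQ'`, which is nonzero because `A` is coprime to `Q` and does not divide `A'`. -/
theorem exists_finite_bad (ha : ∀ j, a j ∈ uDisk) {i : Fin n} (hi : a i = 0) :
    ∃ E : Set ℂ, E.Finite ∧ ∀ b ∈ uDisk, b ∉ E → (fibPoly a b).roots.Nodup := by
  set W : ℂ[X] := derivative (numPoly a) * denPoly a - numPoly a * derivative (denPoly a) with hW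
  have hpos : 0 < (numPoly a).natDegree := by rw [numPoly_natDegree]; exact Fin.pos i
  have hW0 : W ≠ 0 := by
    intro h
    have h1 : numPoly a ∣ derivative (numPoly a) * denPoly a :=
      ⟨_, sub_eq_zero.1 (hW.symm.trans h)⟩
    have h2 : numPoly a ∣ derivative (numPoly a) := (isCoprime_num_den ha).dvd_of_dvd_mul_right h1
    have h3 : derivative (numPoly a) ≠ 0 := by
      intro h4
      have := derivative_eq_zero.1 h4
      omega
    have h4 := natDegree_le_of_dvd h2 h3
    have h5 := natDegree_derivative_lt hpos.ne'
    omega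
  refine ⟨blaschke a '' {w | W.IsRoot w}, (finite_setOfPred_isRoot hW0).image _, fun b hb hbE => ?_⟩
  rw [Multiset.nodup_iff_count_le_one]
  intro w
  by_contra hc
  push Not at hc
  rw [count_roots, one_lt_rootMultiplicity_iff_isRoot (fibPoly_ne_zero hi b)] at hc
  obtain ⟨h1, h2⟩ := hc
  have hwD := fibPoly_root_mem ha hb h1
  refine hbE ⟨w, ?_, (fibPoly_eval_eq_zero_iff ha hwD).1 h1⟩
  have h3 : (numPoly a).eval w - b * (denPoly a).eval w = 0 := by rw [← eval_fibPoly]; exact h1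
  have h4 : (derivative (numPoly a)).eval w - b * (derivative (denPoly a)).eval w = 0 := by
    simpa [fibPoly] using h2
  simp only [mem_ofPred_eq, IsRoot, hW, eval_sub, eval_mul]
  linear_combination (denPoly a).eval w * h4 - (derivative (denPoly a)).eval w * h3

end Blaschke

/-! ### Weierstrass division -/

/-- The difference quotient of a polynomial of degree at most `n`, expanded in powers of the second
variable. -/
theorem exists_diffQuot (n : ℕ) (F : ℂ[X]) (hF : F.natDegree ≤ n) :
    ∃ q : Fin n → ℂ[X], ∀ w z : ℂ,
      F.eval w - F.eval z = (w - z) * ∑ i, (q i).eval w * z ^ (i : ℕ) := by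
  induction n generalizing F with
  | zero =>
    refine ⟨fun _ => 0, fun w z => ?_⟩
    rw [eq_C_of_natDegree_le_zero hF]
    simp
  | succ n ih =>
    obtain ⟨q, hq⟩ := ih F.divX (by rw [natDegree_divX_eq_natDegree_tsub_one]; omega)
    refine ⟨Fin.cons F.divX q, fun w z => ?_⟩
    have h : ∀ x : ℂ, F.eval x = F.divX.eval x * x + F.coeff 0 := fun x => by
      conv_lhs => rw [← divX_mul_X_add F]
      simp
    rw [Fin.sum_univ_succ, h w, h z]
    simp only [Fin.cons_zero, Fin.cons_succ, Fin.val_zero, pow_zero, mul_one, Fin.val_succ, pow_succ]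
    have h2 : ∑ i, (q i).eval w * (z ^ (i : ℕ) * z) = (∑ i, (q i).eval w * z ^ (i : ℕ)) * z := by
      rw [Finset.sum_mul]; exact Finset.sum_congr rfl fun i _ => by ring
    rw [h2]
    linear_combination z * hq w z

theorem differentiableAt_circleIntegral {f f' : ℂ → ℂ → ℂ} {r s : ℝ} (hr : 0 ≤ r)
    (hf : ContinuousOn (Function.uncurry f) (closedBall 0 s ×ˢ sphere 0 r))
    (hf' : ContinuousOn (Function.uncurry f') (closedBall 0 s ×ˢ sphere 0 r))
    (hd : ∀ b ∈ ball (0 : ℂ) s, ∀ w ∈ sphere (0 : ℂ) r, HasDerivAt (fun b => f b w) (f' b w) b)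
    {b₀ : ℂ} (hb₀ : b₀ ∈ ball (0 : ℂ) s) :
    DifferentiableAt ℂ (fun b => ∮ w in C(0, r), f b w) b₀ := by
  have hcirc : ∀ θ : ℝ, circleMap 0 r θ ∈ sphere (0 : ℂ) r := fun θ => circleMap_mem_sphere 0 hr θ
  have hslice : ∀ {k : ℂ → ℂ → ℂ},
      ContinuousOn (Function.uncurry k) (closedBall 0 s ×ˢ sphere 0 r) → ∀ b ∈ ball (0 : ℂ) s,
      Continuous fun θ : ℝ => deriv (circleMap 0 r) θ • k b (circleMap 0 r θ) := by
    intro k hk b hb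
    have h1 : Continuous fun θ : ℝ => k b (circleMap 0 r θ) :=
      hk.comp_continuous (f := fun θ : ℝ => (b, circleMap 0 r θ)) (by fun_prop)
        fun θ => ⟨ball_subset_closedBall hb, hcirc θ⟩
    have h2 : Continuous (deriv (circleMap 0 r)) := by
      simp only [funext (deriv_circleMap 0 r)]
      fun_prop
    exact h2.smul h1
  obtain ⟨M, hM⟩ := ((isCompact_closedBall (0 : ℂ) s).prod
    (isCompact_sphere (0 : ℂ) r)).exists_bound_of_continuousOn hf'
  have hnhds : ball (0 : ℂ) s ∈ 𝓝 b₀ := isOpen_ball.mem_nhds hb₀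
  have key := intervalIntegral.hasDerivAt_integral_of_dominated_loc_of_deriv_le
    (μ := volume) (a := 0) (b := 2 * Real.pi) (bound := fun _ => r * M)
    (F := fun b θ => deriv (circleMap 0 r) θ • f b (circleMap 0 r θ))
    (F' := fun b θ => deriv (circleMap 0 r) θ • f' b (circleMap 0 r θ)) (x₀ := b₀) hnhds
    (by
      filter_upwards [hnhds] with b hb
      exact (hslice hf b hb).aestronglyMeasurable)
    ((hslice hf b₀ hb₀).intervalIntegrable _ _)
    (hslice hf' b₀ hb₀).aestronglyMeasurable
    (by
      refine Eventually.of_forall fun θ _ b hb => ?_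
      rw [norm_smul]
      refine mul_le_mul ?_ (hM (b, circleMap 0 r θ) ⟨ball_subset_closedBall hb, hcirc θ⟩)
        (norm_nonneg _) hr
      simp [abs_of_nonneg hr])
    intervalIntegrable_const
    (by
      refine Eventually.of_forall fun θ _ b hb => ?_
      simpa only [smul_eq_mul] using (hd b hb _ (hcirc θ)).const_mul (deriv (circleMap 0 r) θ))
  exact key.2.differentiableAt

section Division

variable {n : ℕ} {a : Fin n → ℂ}

/-- The fibers over `|b| ≤ s < 1` all lie in one disk of radius `r < 1`, by compactness. -/
theorem exists_radius (ha : ∀ j, a j ∈ uDisk) {s : ℝ} (hs : s < 1) :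
    ∃ r : ℝ, 0 < r ∧ r < 1 ∧ ∀ b w : ℂ, ‖b‖ ≤ s → (fibPoly a b).eval w = 0 → ‖w‖ < r := by
  set T : Set (ℂ × ℂ) := {p | (fibPoly a p.1).eval p.2 = 0} ∩ closedBall 0 s ×ˢ closedBall 0 1
    with hT
  have hmem : ∀ b w : ℂ, ‖b‖ ≤ s → (fibPoly a b).eval w = 0 → (b, w) ∈ T ∧ ‖w‖ < 1 := by
    intro b w hb h
    have hw := mem_uDisk.1 (fibPoly_root_mem ha (mem_uDisk.2 (hb.trans_lt hs)) h)
    exact ⟨⟨h, by simpa using hb, by simpa using hw.le⟩, hw⟩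
  have hclosed : IsClosed {p : ℂ × ℂ | (fibPoly a p.1).eval p.2 = 0} := by
    simp only [eval_fibPoly]
    exact isClosed_eq (by fun_prop) continuous_const
  have hcomp : IsCompact T :=
    ((isCompact_closedBall _ _).prod (isCompact_closedBall _ _)).inter_left hclosed
  rcases T.eq_empty_or_nonempty with h | h
  · refine ⟨1 / 2, by norm_num, by norm_num, fun b w hb hbw => ?_⟩
    have := (hmem b w hb hbw).1
    rw [h] at this
    exact this.elim
  · obtain ⟨p, hp, hmax⟩ := hcomp.exists_isMaxOn h (f := fun p => ‖p.2‖) (by fun_prop)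
    have hp1 : ‖p.2‖ < 1 := (hmem p.1 p.2 (by simpa using hp.2.1) hp.1).2
    refine ⟨(‖p.2‖ + 1) / 2, by positivity, by linarith, fun b w hb hbw => ?_⟩
    have h1 : ‖w‖ ≤ ‖p.2‖ := hmax (hmem b w hb hbw).1
    linarith

/-- Weierstrass division: every holomorphic `h` on the disk is `∑ c_i(B(z)) z ^ i` with
`c_0, …, c_{n-1}` holomorphic on the disk. Here `c_i(b)` is the coefficient of `z ^ i` in
`(2πi)⁻¹ ∮ h(w) / P_b(w) * (P_b(w) - P_b(z)) / (w - z) dw`, over any circle that encloses the roots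
of `P_b`; at a root `z` of `P_b` this is Cauchy's formula for `h(z)`. -/
theorem exists_division (ha : ∀ j, a j ∈ uDisk) {i₀ : Fin n} (hi₀ : a i₀ = 0) {h : ℂ → ℂ}
    (hh : DifferentiableOn ℂ h uDisk) :
    ∃ c : Fin n → ℂ → ℂ, (∀ i, DifferentiableOn ℂ (c i) uDisk) ∧
      ∀ z ∈ uDisk, h z = ∑ i, c i (blaschke a z) * z ^ (i : ℕ) := by
  obtain ⟨α, hα⟩ := exists_diffQuot n (numPoly a) numPoly_natDegree.le
  obtain ⟨β, hβ⟩ := exists_diffQuot n (denPoly a) (denPoly_natDegree_lt hi₀).le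
  have hrad : ∀ b : ℂ, ∃ r : ℝ, b ∈ uDisk → 0 < r ∧ r < 1 ∧
      ∀ b' w : ℂ, ‖b'‖ ≤ (1 + ‖b‖) / 2 → (fibPoly a b').eval w = 0 → ‖w‖ < r := by
    intro b
    by_cases hb : b ∈ uDisk
    · have hb' := mem_uDisk.1 hb
      obtain ⟨r, hr⟩ := exists_radius ha (s := (1 + ‖b‖) / 2) (by linarith)
      exact ⟨r, fun _ => hr⟩
    · exact ⟨0, fun hb' => absurd hb' hb⟩
  choose ρ hρ using hrad
  have hle : ∀ {b : ℂ}, b ∈ uDisk → ‖b‖ < (1 + ‖b‖) / 2 := fun hb => by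
    have := mem_uDisk.1 hb; linarith
  set f : Fin n → ℂ → ℂ → ℂ := fun i b w =>
    h w * ((α i).eval w - b * (β i).eval w) / (fibPoly a b).eval w with hf
  have hsub : ∀ {r : ℝ}, r < 1 → closedBall (0 : ℂ) r ⊆ uDisk := fun hr =>
    closedBall_subset_ball hr
  have hindep : ∀ (i : Fin n) (b : ℂ) (r R : ℝ), 0 < r → r ≤ R → R < 1 →
      (∀ w, (fibPoly a b).eval w = 0 → ‖w‖ < r) →
      (∮ w in C(0, R), f i b w) = ∮ w in C(0, r), f i b w := by
    intro i b r R hr hrR hR hroot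
    have hd : ∀ w ∈ uDisk, r ≤ ‖w‖ → DifferentiableAt ℂ (f i b) w := by
      intro w hw hrw
      have h1 : DifferentiableAt ℂ h w := hh.differentiableAt (isOpen_ball.mem_nhds hw)
      refine ((h1.mul ?_).div (fibPoly a b).differentiableAt fun h0 =>
        absurd (hroot w h0) (not_lt.2 hrw))
      exact (α i).differentiableAt.sub ((β i).differentiableAt.const_mul b)
    refine circleIntegral_eq_of_differentiable_on_annulus_off_countable hr hrR
      (s := ∅) countable_empty ?_ ?_
    · intro w hw
      exact (hd w (hsub hR hw.1) (by simpa using hw.2)).continuousAt.continuousWithinAt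
    · intro w hw
      refine hd w (hsub hR (ball_subset_closedBall hw.1.1)) ?_
      have := hw.1.2
      simp only [mem_closedBall, dist_zero_right, not_le] at this
      exact this.le
  have hindep' : ∀ (i : Fin n) (b : ℂ) (r R : ℝ), 0 < r → 0 < R → r < 1 → R < 1 →
      (∀ w, (fibPoly a b).eval w = 0 → ‖w‖ < r) → (∀ w, (fibPoly a b).eval w = 0 → ‖w‖ < R) →
      (∮ w in C(0, R), f i b w) = ∮ w in C(0, r), f i b w := by
    intro i b r R hr hR hr1 hR1 h1 h2
    rcases le_total r R with h | h
    · exact hindep i b r R hr h hR1 h1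
    · exact (hindep i b R r hR h hr1 h2).symm
  refine ⟨fun i b => (2 * Real.pi * I : ℂ)⁻¹ * ∮ w in C(0, ρ b), f i b w, fun i b₀ hb₀ => ?_,
    fun z hz => ?_⟩
  · obtain ⟨hr0, hr1, hr⟩ := hρ b₀ hb₀
    have hb₀1 := mem_uDisk.1 hb₀
    refine DifferentiableAt.differentiableWithinAt (DifferentiableAt.const_mul ?_ _)
    -- near `b₀` the radius may be frozen at `ρ b₀`
    have hev : (fun b => ∮ w in C(0, ρ b), f i b w) =ᶠ[𝓝 b₀]
        fun b => ∮ w in C(0, ρ b₀), f i b w := by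
      have : ball (0 : ℂ) ((1 + ‖b₀‖) / 2) ∈ 𝓝 b₀ :=
        isOpen_ball.mem_nhds (by simpa using hle hb₀)
      filter_upwards [this] with b hb
      have hb' : ‖b‖ < (1 + ‖b₀‖) / 2 := by simpa using hb
      have hbD : b ∈ uDisk := mem_uDisk.2 (by linarith)
      obtain ⟨hs0, hs1, hs⟩ := hρ b hbD
      exact hindep' i b _ _ hr0 hs0 hr1 hs1 (fun w hw => hr b w hb'.le hw)
        (fun w hw => hs b w (hle hbD).le hw)
    refine DifferentiableAt.congr_of_eventuallyEq ?_ hev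
    have hne : ∀ b ∈ closedBall (0 : ℂ) ((1 + ‖b₀‖) / 2), ∀ w ∈ sphere (0 : ℂ) (ρ b₀),
        (fibPoly a b).eval w ≠ 0 := by
      intro b hb w hw h0
      have := hr b w (by simpa using hb) h0
      simp only [mem_sphere_iff_norm, sub_zero] at hw
      linarith
    have hhc : ContinuousOn (fun p : ℂ × ℂ => h p.2)
        (closedBall 0 ((1 + ‖b₀‖) / 2) ×ˢ sphere 0 (ρ b₀)) :=
      hh.continuousOn.comp continuousOn_snd fun p hp =>
        hsub hr1 (sphere_subset_closedBall hp.2)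
    have hPc : Continuous fun p : ℂ × ℂ => (fibPoly a p.1).eval p.2 := by
      simp only [eval_fibPoly]; fun_prop
    refine differentiableAt_circleIntegral (s := (1 + ‖b₀‖) / 2) (f' := fun b w =>
        h w * ((-(β i).eval w) * (fibPoly a b).eval w -
          ((α i).eval w - b * (β i).eval w) * (-(denPoly a).eval w)) / (fibPoly a b).eval w ^ 2)
      hr0.le ?_ ?_ ?_ (by simpa using hle hb₀)
    · exact (hhc.mul (Continuous.continuousOn (by fun_prop))).div hPc.continuousOn
        fun p hp => hne p.1 hp.1 p.2 hp.2
    · exact (hhc.mul (Continuous.continuousOn (by fun_prop))).div (hPc.pow 2).continuousOn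
        fun p hp => pow_ne_zero 2 (hne p.1 hp.1 p.2 hp.2)
    · intro b hb w hw
      have h1 : HasDerivAt (fun b => (α i).eval w - b * (β i).eval w) (-(β i).eval w) b := by
        simpa using ((hasDerivAt_id b).mul_const ((β i).eval w)).const_sub ((α i).eval w)
      have h2 : HasDerivAt (fun b => (fibPoly a b).eval w) (-(denPoly a).eval w) b := by
        simp only [eval_fibPoly]
        simpa using ((hasDerivAt_id b).mul_const ((denPoly a).eval w)).const_sub
          ((numPoly a).eval w)
      have h3 := (h1.div h2 (hne b (ball_subset_closedBall hb) w hw)).const_mul (h w)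
      simpa only [hf, mul_div_assoc, Pi.div_apply] using h3
  · set b := blaschke a z with hb
    have hbD : b ∈ uDisk := blaschke_mem ha i₀ hz
    obtain ⟨hr0, hr1, hr⟩ := hρ b hbD
    have hPz : (fibPoly a b).eval z = 0 := (fibPoly_eval_eq_zero_iff ha hz).2 rfl
    have hzr : ‖z‖ < ρ b := hr b z (hle hbD).le hPz
    have hne : ∀ w ∈ sphere (0 : ℂ) (ρ b), (fibPoly a b).eval w ≠ 0 := by
      intro w hw h0
      have := hr b w (hle hbD).le h0
      simp only [mem_sphere_iff_norm, sub_zero] at hw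
      linarith
    have hcauchy := (hh.mono (hsub hr1)).circleIntegral_sub_inv_smul (w := z) (by simpa using hzr)
    have hfint : ∀ i, CircleIntegrable (f i b) 0 (ρ b) := by
      intro i
      refine ContinuousOn.circleIntegrable hr0.le ?_
      exact ((hh.continuousOn.mono (sphere_subset_closedBall.trans (hsub hr1))).mul
        (Continuous.continuousOn (by fun_prop))).div (by fun_prop) hne
    have hsum : (∮ w in C(0, ρ b), (w - z)⁻¹ • h w) =
        ∑ i, (∮ w in C(0, ρ b), f i b w) * z ^ (i : ℕ) := by
      have h1 : ∀ i : Fin n, (∮ w in C(0, ρ b), f i b w) * z ^ (i : ℕ) =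
          ∮ w in C(0, ρ b), z ^ (i : ℕ) • f i b w := fun i => by
        rw [circleIntegral.integral_smul, smul_eq_mul, mul_comm]
      simp only [h1]
      rw [← circleIntegral.integral_fun_sum]
      · refine circleIntegral.integral_congr hr0.le fun w hw => ?_
        have hwz : w - z ≠ 0 := by
          intro h0
          rw [sub_eq_zero.1 h0] at hw
          simp only [mem_sphere_iff_norm, sub_zero] at hw
          linarith
        have hP := hne w hw
        have h2 : (fibPoly a b).eval w =
            (w - z) * ∑ i, ((α i).eval w - b * (β i).eval w) * z ^ (i : ℕ) := by
          rw [eval_fibPoly] at hPz ⊢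
          simp only [sub_mul, Finset.sum_sub_distrib, mul_assoc, ← Finset.mul_sum]
          linear_combination hα w z - b * hβ w z + hPz
        have h3 : ∑ i : Fin n, z ^ (i : ℕ) • f i b w =
            h w * (∑ i, ((α i).eval w - b * (β i).eval w) * z ^ (i : ℕ)) /
              (fibPoly a b).eval w := by
          rw [Finset.mul_sum, Finset.sum_div]
          refine Finset.sum_congr rfl fun i _ => ?_
          simp only [hf, smul_eq_mul]
          ring
        rw [h3, smul_eq_mul, eq_div_iff hP, h2]
        field_simp
      · intro i _
        exact (hfint i).const_smul
    rw [hsum] at hcauchy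
    simp only [mul_assoc _ (circleIntegral _ _ _), ← Finset.mul_sum]
    rw [hcauchy, smul_eq_mul, ← mul_assoc, inv_mul_cancel₀ (by simp [Real.pi_ne_zero]), one_mul]

end Division

/-! ### The ring of holomorphic functions and composition with `B` -/

/-- The ring of holomorphic functions on the disk, as a subring of the functions on the subtype
`uDisk` (so that two elements are equal as soon as they agree on the disk). -/
def HolRing : Subring (uDisk → ℂ) where
  carrier := {f | ∃ F : ℂ → ℂ, DifferentiableOn ℂ F uDisk ∧ ∀ z : uDisk, f z = F z}
  mul_mem' := by
    rintro f g ⟨F, hF, hf⟩ ⟨G, hG, hg⟩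
    exact ⟨fun z => F z * G z, hF.mul hG, fun z => by simp [hf, hg]⟩
  one_mem' := ⟨fun _ => 1, differentiableOn_const _, fun _ => rfl⟩
  add_mem' := by
    rintro f g ⟨F, hF, hf⟩ ⟨G, hG, hg⟩
    exact ⟨fun z => F z + G z, hF.add hG, fun z => by simp [hf, hg]⟩
  zero_mem' := ⟨fun _ => 0, differentiableOn_const _, fun _ => rfl⟩
  neg_mem' := by
    rintro f ⟨F, hF, hf⟩
    exact ⟨fun z => -F z, hF.neg, fun z => by simp [hf]⟩

/-- A function holomorphic on the disk, as an element of `HolRing`. -/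
def HolRing.mk (F : ℂ → ℂ) (hF : DifferentiableOn ℂ F uDisk) : HolRing :=
  ⟨fun z => F z, F, hF, fun _ => rfl⟩

/-- Evaluation at a point of the disk. -/
def HolRing.ev (z : uDisk) : HolRing →+* ℂ := (Pi.evalRingHom (fun _ => ℂ) z).comp HolRing.subtype

theorem HolRing.ev_apply (z : uDisk) (f : HolRing) : HolRing.ev z f = f.1 z := rfl

theorem HolRing.ext_ev {f g : HolRing} (h : ∀ z, HolRing.ev z f = HolRing.ev z g) : f = g :=
  Subtype.ext (funext h)

instance : Nontrivial HolRing := by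
  refine ⟨0, 1, fun h => ?_⟩
  have := congrArg (HolRing.ev ⟨0, mem_uDisk.2 (by simp)⟩) h
  simp at this

instance : NoZeroDivisors HolRing where
  eq_zero_or_eq_zero_of_mul_eq_zero := by
    rintro ⟨f, F, hF, hf⟩ ⟨g, G, hG, hg⟩ h
    have h1 : ∀ z ∈ uDisk, F z * G z = 0 := fun z hz => by
      have := congrFun (congrArg Subtype.val h) ⟨z, hz⟩
      simpa [hf, hg] using this
    rcases (hF.analyticOnNhd isOpen_ball).eq_zero_or_eq_zero_of_mul_eq_zero
      (hG.analyticOnNhd isOpen_ball) h1 (convex_ball (0 : ℂ) 1).isPreconnected with h2 | h2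
    · left
      exact Subtype.ext (funext fun z => by simp [hf, h2 z z.2])
    · right
      exact Subtype.ext (funext fun z => by simp [hg, h2 z z.2])

instance : IsDomain HolRing := NoZeroDivisors.to_isDomain _

theorem HolRing.exists_ne {f : HolRing} (hf : f ≠ 0) {E : Set ℂ} (hE : E.Finite) :
    ∃ b : uDisk, (b : ℂ) ∉ E ∧ HolRing.ev b f ≠ 0 := by
  have : ∃ b₀, HolRing.ev b₀ f ≠ 0 := by
    by_contra! h
    exact hf (HolRing.ext_ev fun z => by rw [h z, map_zero])
  obtain ⟨b₀, hb₀⟩ := this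
  obtain ⟨F, hF, hfF⟩ := f.2
  simp only [HolRing.ev_apply, hfF] at hb₀ ⊢
  have hcont : ContinuousAt F b₀ := (hF.continuousOn).continuousAt (isOpen_ball.mem_nhds b₀.2)
  have hV : {b | F b ≠ 0} ∩ uDisk ∈ 𝓝 (b₀ : ℂ) :=
    inter_mem (hcont.eventually_ne hb₀) (isOpen_ball.mem_nhds b₀.2)
  obtain ⟨b, hb, hbE⟩ := ((infinite_of_mem_nhds _ hV).sdiff hE).nonempty
  exact ⟨⟨b, hb.2⟩, hbE, hb.1⟩

section Final

variable {n : ℕ} {a : Fin n → ℂ}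

/-- The Blaschke product as a self-map of the disk. -/
def diskB (ha : ∀ j, a j ∈ uDisk) (i : Fin n) (z : uDisk) : uDisk :=
  ⟨blaschke a z, blaschke_mem ha i z.2⟩

/-- Composition with the Blaschke product, `f ↦ f ∘ B`. -/
def compB (ha : ∀ j, a j ∈ uDisk) (i : Fin n) : HolRing →+* HolRing where
  toFun f := ⟨fun z => f.1 (diskB ha i z), by
    obtain ⟨F, hF, hf⟩ := f.2
    exact ⟨F ∘ blaschke a, hF.comp (differentiableOn_blaschke ha) fun z hz => blaschke_mem ha i hz,
      fun z => hf _⟩⟩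
  map_one' := rfl
  map_mul' _ _ := rfl
  map_zero' := rfl
  map_add' _ _ := rfl

theorem ev_compB (ha : ∀ j, a j ∈ uDisk) (i : Fin n) (f : HolRing) (z : uDisk) :
    HolRing.ev z (compB ha i f) = HolRing.ev (diskB ha i z) f := rfl

/-- A polynomial of degree less than `n` that vanishes on a fiber of `n` distinct points is zero. -/
theorem coeff_eq_zero_of_fiber (ha : ∀ j, a j ∈ uDisk) {i : Fin n} (hi : a i = 0) {b : ℂ}
    (hb : b ∈ uDisk) (hnd : (fibPoly a b).roots.Nodup) (c : Fin n → ℂ)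
    (hc : ∀ w ∈ uDisk, blaschke a w = b → ∑ j, c j * w ^ (j : ℕ) = 0) : ∀ j, c j = 0 := by
  set p : ℂ[X] := ∑ j : Fin n, C (c j) * X ^ (j : ℕ) with hp
  have hdeg : p.degree < n := degree_sum_fin_lt c
  have hp0 : p = 0 := by
    refine eq_zero_of_degree_lt_of_eval_finset_eq_zero (fibPoly a b).roots.toFinset ?_ ?_
    · rw [Multiset.toFinset_card_of_nodup hnd, card_roots_fibPoly hi]
      exact hdeg
    · intro w hw
      have hw' : (fibPoly a b).eval w = 0 := (mem_roots'.1 (Multiset.mem_toFinset.1 hw)).2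
      have hwD := fibPoly_root_mem ha hb hw'
      simpa [hp, eval_finsetSum] using hc w hwD ((fibPoly_eval_eq_zero_iff ha hwD).1 hw')
  intro j
  have := congrArg (fun q => q.coeff (j : ℕ)) hp0
  simpa [hp, finsetSum_coeff, coeff_C_mul, coeff_X_pow, Fin.val_inj] using this

end Final

/-- If the degree `n` of `B` is prime, `g ∈ H^∞`, and `Γ(g)` vanishes
identically on `𝔻`, then `g = g₁ ∘ B` for some bounded holomorphic `g₁` on `𝔻`. -/
theorem stmt14 {n : ℕ} (hn : n.Prime) (a : Fin n → ℂ) (ha : ∀ j, a j ∈ uDisk)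
    (ha0 : a ⟨0, Nat.pos_of_ne_zero (by simpa using hn.pos.ne')⟩ = 0)
    (g Γg : ℂ → ℂ) (hg : MemHinf g) (hΓg : IsGamma a g Γg)
    (hvan : ∀ z ∈ uDisk, Γg z = 0) :
    ∃ g₁ : ℂ → ℂ, MemHinf g₁ ∧ ∀ z ∈ uDisk, g z = g₁ (blaschke a z) := by
  obtain ⟨i₀, hi₀⟩ : ∃ i, a i = 0 := ⟨_, ha0⟩
  obtain ⟨E, hE, hnd⟩ := exists_finite_bad ha hi₀
  set φ := compB ha i₀ with hφ
  let Z : HolRing := HolRing.mk id differentiableOn_id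
  let G : HolRing := HolRing.mk g hg.1
  have hφinj : Function.Injective φ := by
    intro f₁ f₂ h
    refine HolRing.ext_ev fun b => ?_
    obtain ⟨w, hw, hwb⟩ := blaschke_surj ha hi₀ b.2
    have hb : diskB ha i₀ ⟨w, hw⟩ = b := Subtype.ext hwb
    rw [← hb, ← ev_compB, ← ev_compB, ← hφ, h]
  have hind : ∀ c : Fin n → HolRing, ∑ j, φ (c j) * Z ^ (j : ℕ) = 0 → ∀ j, c j = 0 := by
    intro c hc j
    by_contra hj
    obtain ⟨b, hbE, hbj⟩ := HolRing.exists_ne hj hE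
    refine hbj (coeff_eq_zero_of_fiber ha hi₀ b.2 (hnd b b.2 hbE)
      (fun j => HolRing.ev b (c j)) (fun w hw hwb => ?_) j)
    have hb : diskB ha i₀ ⟨w, hw⟩ = b := Subtype.ext hwb
    have h1 := congrArg (HolRing.ev ⟨w, hw⟩) hc
    simp only [map_sum, map_mul, map_pow, map_zero, hφ, ev_compB, hb] at h1
    exact h1
  have hdiv : ∀ (h : ℂ → ℂ) (hh : DifferentiableOn ℂ h uDisk), ∃ c : Fin n → HolRing,
      HolRing.mk h hh = ∑ j, φ (c j) * Z ^ (j : ℕ) := by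
    intro h hh
    obtain ⟨c, hc, hhc⟩ := exists_division ha hi₀ hh
    refine ⟨fun j => HolRing.mk (c j) (hc j), HolRing.ext_ev fun z => ?_⟩
    simp only [map_sum, map_mul, map_pow, hφ, ev_compB]
    exact hhc z z.2
  have hspan : ∀ s : HolRing, ∃ c : Fin n → HolRing, s = ∑ j, φ (c j) * Z ^ (j : ℕ) := by
    rintro ⟨s, F, hF, hs⟩
    obtain ⟨c, hc⟩ := hdiv F hF
    exact ⟨c, hc ▸ HolRing.ext_ev fun z => hs z⟩
  rcases algebra_dichotomy φ hφinj hn Z G hind hspan with ⟨D, e, hD, hDe⟩ | ⟨D, p, hD, hDp⟩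
  -- `g` is constant on almost all fibers, hence equals its own constant term `c₀ ∘ B`
  · obtain ⟨c, hc, hgc⟩ := exists_division ha hi₀ hg.1
    have hDe' : ∀ w (hw : w ∈ uDisk), HolRing.ev (diskB ha i₀ ⟨w, hw⟩) D * g w =
        HolRing.ev (diskB ha i₀ ⟨w, hw⟩) e := fun w hw => by
      have := congrArg (HolRing.ev ⟨w, hw⟩) hDe
      simp only [map_mul, hφ, ev_compB] at this
      exact this
    have hc0 : ∀ j : Fin n, (j : ℕ) ≠ 0 → ∀ b ∈ uDisk, c j b = 0 := by
      intro j hj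
      suffices h : HolRing.mk (c j) (hc j) = 0 by
        intro b hb
        exact congrArg (HolRing.ev ⟨b, hb⟩) h
      by_contra hcj
      obtain ⟨b, hbE, hb⟩ := HolRing.exists_ne (mul_ne_zero hD hcj) hE
      rw [map_mul] at hb
      have hDb := left_ne_zero_of_mul hb
      have key := coeff_eq_zero_of_fiber ha hi₀ b.2 (hnd b b.2 hbE)
        (fun k => c k b - if (k : ℕ) = 0 then HolRing.ev b e / HolRing.ev b D else 0)
        (fun w hw hwb => by
          have hb' : diskB ha i₀ ⟨w, hw⟩ = b := Subtype.ext hwb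
          have h1 := hDe' w hw
          rw [hb'] at h1
          have h2 := hgc w hw
          rw [hwb] at h2
          have h3 : ∑ k : Fin n, (if (k : ℕ) = 0 then HolRing.ev b e / HolRing.ev b D else 0) *
              w ^ (k : ℕ) = HolRing.ev b e / HolRing.ev b D := by
            rw [Finset.sum_eq_single (⟨0, hn.pos⟩ : Fin n)]
            · simp
            · intro k _ hk
              rw [if_neg (fun h => hk (Fin.ext h)), zero_mul]
            · simp
          simp only [sub_mul, Finset.sum_sub_distrib, h3, ← h2]
          rw [sub_eq_zero, eq_div_iff hDb, mul_comm, h1]) j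
      rw [if_neg hj, sub_zero] at key
      exact right_ne_zero_of_mul hb key
    have hgB : ∀ z ∈ uDisk, g z = c ⟨0, hn.pos⟩ (blaschke a z) := by
      intro z hz
      rw [hgc z hz, Finset.sum_eq_single (⟨0, hn.pos⟩ : Fin n)]
      · simp
      · intro k _ hk
        rw [hc0 k (fun h => hk (Fin.ext h)) _ (blaschke_mem ha i₀ hz), zero_mul]
      · simp
    obtain ⟨M, hM⟩ := hg.2
    refine ⟨c ⟨0, hn.pos⟩, ⟨hc _, M, fun b hb => ?_⟩, hgB⟩
    obtain ⟨w, hw, rfl⟩ := blaschke_surj ha hi₀ hb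
    rw [← hgB w hw]
    exact hM w hw
  -- `g` separates the points of almost all fibers, against the vanishing of `Γ(g)`
  · exfalso
    obtain ⟨b, hbE, hDb⟩ := HolRing.exists_ne hD hE
    obtain ⟨z, hz, hzb⟩ := blaschke_surj ha hi₀ b.2
    have hcal : calD a g z = 0 := by rw [← hΓg.2 z hz, hvan z hz, zero_mul]
    rw [calD, Multiset.prod_eq_zero_iff, Multiset.mem_map] at hcal
    obtain ⟨w, hw, hgw⟩ := hcal
    rw [fiberMS_eq, hzb, (hnd b b.2 hbE).mem_erase_iff] at hw
    have hw0 : (fibPoly a b).eval w = 0 := (mem_roots'.1 hw.2).2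
    have hwD := fibPoly_root_mem ha b.2 hw0
    have hwb := (fibPoly_eval_eq_zero_iff ha hwD).1 hw0
    have hval : ∀ v (hv : v ∈ uDisk), blaschke a v = b →
        HolRing.ev b D * v = p.eval₂ (HolRing.ev b) (g v) := fun v hv hvb => by
      have hb : diskB ha i₀ ⟨v, hv⟩ = b := Subtype.ext hvb
      have hcomp : (HolRing.ev ⟨v, hv⟩).comp φ = HolRing.ev b := by
        ext f
        rw [RingHom.comp_apply, hφ, ev_compB, hb]
      have h1 := congrArg (HolRing.ev ⟨v, hv⟩) hDp
      rw [hom_eval₂, hcomp, map_mul, hφ, ev_compB, hb] at h1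
      exact h1
    have h1 := hval z hz hzb
    have h2 := hval w hwD hwb
    rw [sub_eq_zero.1 hgw, ← h2] at h1
    exact hw.1 (mul_left_cancel₀ hDb h1).symm
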